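/- arXiv:2101.04911 — 2 statements merged into one kernel-verified Lean document; each statement's English description precedes it below -/
import Mathlib

section
/- Let α > −1 and n ≥ 1, let ψ be analytic on 𝔻, not identically 0, and φ a nonconstant analytic self-map of 𝔻, and suppose D_{ψ,φ,n} is bounded and J-symmetric on A_α². Then ψ(w) ≠ 0 for every w ∈ 𝔻 \ {0}. -/
open Complex Metric Set

noncomputable section

/-- The open unit disk in `ℂ`. -/
def unitDisk : Set ℂ := Metric.ball 0 1

/-- `wb2 α j` is `β(j)² = j!·Γ(α+2)/Γ(j+α+2)`, the square of the norm of `z^j` in `A_α²`. -/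
def wb2 (α : ℝ) (j : ℕ) : ℝ :=
  (j.factorial : ℝ) * Real.Gamma (α + 2) / Real.Gamma ((j : ℝ) + α + 2)

/-- The `j`-th Taylor coefficient of `f` at `0`. -/
def tcoeff (f : ℂ → ℂ) (j : ℕ) : ℂ := iteratedDeriv j f 0 / (j.factorial : ℂ)

/-- An abstract model of the weighted Bergman space `A_α²`: a complex Hilbert space `H`
whose elements are (identified with) the analytic functions on the unit disk with
square-summable weighted Taylor coefficients, with the weighted `ℓ²` inner product. -/
structure BergmanModel (α : ℝ) (H : Type) [NormedAddCommGroup H]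
    [InnerProductSpace ℂ H] where
  emb : H →ₗ[ℂ] (ℂ → ℂ)
  analyticOn : ∀ f : H, AnalyticOnNhd ℂ (emb f) unitDisk
  summable_norm : ∀ f : H, Summable (fun j => ‖tcoeff (emb f) j‖ ^ 2 * wb2 α j)
  inj : ∀ f g : H, Set.EqOn (emb f) (emb g) unitDisk → f = g
  exists_rep : ∀ F : ℂ → ℂ, AnalyticOnNhd ℂ F unitDisk →
      Summable (fun j => ‖tcoeff F j‖ ^ 2 * wb2 α j) →
      ∃ f : H, Set.EqOn (emb f) F unitDisk
  inner_eq : ∀ f g : H,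
      (@inner ℂ H _ f g) =
        ∑' j : ℕ, (starRingEnd ℂ) (tcoeff (emb f) j) * tcoeff (emb g) j * (wb2 α j : ℂ)

/-- The derivative-evaluation kernel `K_w^{(m)}(z) = m!·z^m / (β(m)²·(1-conj(w)·z)^(m+α+2))`. -/
def kern (α : ℝ) (m : ℕ) (w z : ℂ) : ℂ :=
  (m.factorial : ℂ) * z ^ m /
    ((wb2 α m : ℂ) * (1 - (starRingEnd ℂ) w * z) ^ ((m : ℂ) + (α : ℂ) + 2))

/-!
If `ψ w = 0`, every function in the range of `D = D_{ψ,φ,n}` vanishes at `w`, so `D* K_w = 0`,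
where `K_w = kern α 0 w` is the reproducing kernel. Conjugation by `J` exchanges `K_w` and
`K_{conj w}`, so `J`-symmetry turns this into `D K_{conj w} = 0`, that is
`ψ · (K_{conj w}^{(n)} ∘ φ) = 0`. As `ψ ≢ 0` and `φ` is an open map, `K_{conj w}^{(n)}` vanishes on
the whole disk. But the `n`-th Taylor coefficient of `K_{conj w}` is `w ^ n / β(n)²`, which is
nonzero for `w ≠ 0`.
-/

open scoped ComplexConjugate

theorem mem_unitDisk {z : ℂ} : z ∈ unitDisk ↔ ‖z‖ < 1 :=
  mem_ball_zero_iff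

theorem zero_mem_unitDisk : (0 : ℂ) ∈ unitDisk :=
  mem_ball_self one_pos

theorem conj_mem_unitDisk {z : ℂ} (hz : z ∈ unitDisk) : conj z ∈ unitDisk := by
  simpa only [mem_unitDisk, RCLike.norm_conj] using hz

theorem isOpen_unitDisk : IsOpen unitDisk :=
  isOpen_ball

theorem isPreconnected_unitDisk : IsPreconnected unitDisk :=
  (convex_ball 0 1).isPreconnected

theorem eqOn_zero_of_comp_eqOn_zero {E : Type*} [NormedAddCommGroup E] [NormedSpace ℂ E]
    {U V : Set ℂ} {φ : ℂ → ℂ} {g : ℂ → E} (hU : IsPreconnected U) (hUo : IsOpen U)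
    (hV : IsPreconnected V) (hφ : AnalyticOnNhd ℂ φ U) (hφm : MapsTo φ U V)
    (hφnc : (φ '' U).Nontrivial) (hg : AnalyticOnNhd ℂ g V) (h : EqOn (g ∘ φ) 0 U) :
    EqOn g 0 V := by
  have himage : IsOpen (φ '' U) := by
    refine (hφ.is_constant_or_isOpen hU).elim (fun ⟨c, hc⟩ ↦ ?_) fun hopen ↦ hopen U subset_rfl hUo
    exact absurd (subsingleton_singleton.anti (image_subset_iff.2 hc)) hφnc.not_subsingleton
  obtain ⟨z, hz⟩ := hφnc.nonempty.of_image
  refine hg.eqOn_zero_of_preconnected_of_eventuallyEq_zero hV (hφm hz) ?_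
  filter_upwards [himage.mem_nhds (mem_image_of_mem φ hz)]
  rintro _ ⟨y, hy, rfl⟩
  exact h hy

theorem eqOn_zero_of_mul_comp_eqOn_zero {U V : Set ℂ} {ψ φ g : ℂ → ℂ} (hU : IsPreconnected U)
    (hUo : IsOpen U) (hV : IsPreconnected V) (hψ : AnalyticOnNhd ℂ ψ U) (hψ0 : ∃ z ∈ U, ψ z ≠ 0)
    (hφ : AnalyticOnNhd ℂ φ U) (hφm : MapsTo φ U V) (hφnc : (φ '' U).Nontrivial)
    (hg : AnalyticOnNhd ℂ g V) (h : ∀ z ∈ U, ψ z * g (φ z) = 0) : EqOn g 0 V := by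
  have hprod := hψ.eq_zero_or_eq_zero_of_mul_eq_zero (hg.comp hφ hφm) h hU
  refine eqOn_zero_of_comp_eqOn_zero hU hUo hV hφ hφm hφnc hg (hprod.resolve_left fun hzero ↦ ?_)
  obtain ⟨z, hz, hne⟩ := hψ0
  exact hne (hzero z hz)

theorem tcoeff_congr {f g : ℂ → ℂ} (h : EqOn f g unitDisk) : tcoeff f = tcoeff g := by
  funext j
  rw [tcoeff, tcoeff, h.iteratedDeriv_of_isOpen isOpen_unitDisk j zero_mem_unitDisk]

theorem tcoeff_eq_of_hasFPowerSeriesAt {f : ℂ → ℂ} {a : ℕ → ℂ}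
    (h : HasFPowerSeriesAt f (.ofScalars ℂ a) 0) : tcoeff f = a :=
  FormalMultilinearSeries.ofScalars_series_injective ℂ ℂ
    (h.analyticAt.hasFPowerSeriesAt.eq_formalMultilinearSeries h)

theorem hasFPowerSeriesOnBall_comp_const_mul {f : ℂ → ℂ} {a : ℕ → ℂ} {r : ENNReal}
    (hf : HasFPowerSeriesOnBall f (.ofScalars ℂ a) 0 r) {c : ℂ} (hc : ‖c‖ ≤ 1) :
    HasFPowerSeriesOnBall (fun z ↦ f (c * z)) (.ofScalars ℂ fun j ↦ c ^ j * a j) 0 r := by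
  let mulLeft : ℂ →L[ℂ] ℂ := c • .id ℂ ℂ
  have hnorm : ‖mulLeft‖ₑ ≤ 1 := by
    rw [← enorm_one (G := ℂ), enorm_le_iff_norm_le, norm_one, norm_smul]
    simpa using hc
  have hradius : r ≤ r / ‖mulLeft‖ₑ := by
    simpa only [div_one] using ENNReal.div_le_div_left hnorm r
  have hseries : (FormalMultilinearSeries.ofScalars ℂ a).compContinuousLinearMap mulLeft =
      .ofScalars ℂ fun j ↦ c ^ j * a j := by
    ext j
    rw [FormalMultilinearSeries.compContinuousLinearMap_apply]
    simp [mulLeft]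
  rw [← map_zero mulLeft] at hf
  rw [← hseries]
  exact hf.compContinuousLinearMap.mono (by simpa using hf.r_pos) hradius

theorem hasSum_tcoeff {f : ℂ → ℂ} (hf : AnalyticOnNhd ℂ f unitDisk) {z : ℂ}
    (hz : z ∈ unitDisk) : HasSum (fun j ↦ tcoeff f j * z ^ j) (f z) := by
  refine (hasSum_taylorSeries_on_ball hf.differentiableOn hz).congr_fun fun j ↦ ?_
  simp only [tcoeff, sub_zero, smul_eq_mul]
  ring

section Kernel

variable {α : ℝ}

theorem wb2_pos (hα : -2 < α) (j : ℕ) : 0 < wb2 α j := by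
  have hj : (0 : ℝ) < j + α + 2 := by linarith [j.cast_nonneg (α := ℝ)]
  exact div_pos (mul_pos (mod_cast j.factorial_pos) (Real.Gamma_pos_of_pos (by linarith)))
    (Real.Gamma_pos_of_pos hj)

theorem ofReal_wb2_ne_zero (hα : -2 < α) (j : ℕ) : (wb2 α j : ℂ) ≠ 0 :=
  ofReal_ne_zero.2 (wb2_pos hα j).ne'

theorem wb2_zero (hα : -2 < α) : wb2 α 0 = 1 := by
  simp [wb2, (Real.Gamma_pos_of_pos (by linarith : 0 < α + 2)).ne']

theorem choose_eq_inv_wb2 (hα : -2 < α) (j : ℕ) :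
    Ring.choose ((α + 2 : ℂ) + j - 1) j = (wb2 α j : ℂ)⁻¹ := by
  have hfact : (j.factorial : ℂ) ≠ 0 := mod_cast j.factorial_ne_zero
  have hpole (m : ℕ) : (α + 2 : ℂ) ≠ -m := by
    refine mod_cast (?_ : α + 2 ≠ -m)
    linarith [m.cast_nonneg (α := ℝ)]
  have hpoch : (j.factorial : ℂ) * Ring.choose ((α + 2 : ℂ) + j - 1) j =
      Gamma (α + 2 + j) / Gamma (α + 2) := by
    rw [← Ring.multichoose_eq, ← nsmul_eq_mul, Ring.factorial_nsmul_multichoose_eq_ascPochhammer,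
      Polynomial.ascPochhammer_smeval_eq_eval, Gamma_add_nat_div_Gamma_eq _ hpole]
  have hwb2 : (wb2 α j : ℂ)⁻¹ = Gamma (α + 2 + j) / Gamma (α + 2) / j.factorial := by
    rw [wb2, add_assoc, add_comm (j : ℝ)]
    simp only [ofReal_div, ofReal_mul, ofReal_natCast, ← Gamma_ofReal, ofReal_add, ofReal_ofNat,
      inv_div]
    rw [mul_comm, div_div]
  rw [hwb2, ← hpoch, mul_div_cancel_left₀ _ hfact]

theorem kern_zero (hα : -2 < α) (w z : ℂ) :
    kern α 0 w z = 1 / (1 - conj w * z) ^ (α + 2 : ℂ) := by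
  simp [kern, wb2_zero hα]

theorem conj_kern (m : ℕ) {w z : ℂ} (hw : ‖w‖ ≤ 1) (hz : z ∈ unitDisk) :
    conj (kern α m w z) = kern α m (conj w) (conj z) := by
  have hnorm : ‖-(conj w * z)‖ < 1 := by
    rw [norm_neg, norm_mul, RCLike.norm_conj]
    exact mul_lt_one_of_nonneg_of_lt_one_right hw (norm_nonneg z) (mem_unitDisk.1 hz)
  have harg : (1 - conj w * z).arg ≠ Real.pi := by
    simpa only [sub_eq_add_neg] using slitPlane_arg_ne_pi (mem_slitPlane_of_norm_lt_one hnorm)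
  have hcpow := conj_cpow (1 - conj w * z) ((m : ℂ) + α + 2) harg
  simp only [map_sub, map_add, map_one, map_mul, conj_conj, map_natCast, map_ofNat,
    conj_ofReal] at hcpow
  simp [kern, hcpow]

theorem hasFPowerSeriesOnBall_kern_zero (hα : -2 < α) {w : ℂ} (hw : ‖w‖ ≤ 1) :
    HasFPowerSeriesOnBall (kern α 0 w) (.ofScalars ℂ fun j ↦ conj w ^ j / (wb2 α j : ℂ)) 0 1 := by
  have hbinomial := hasFPowerSeriesOnBall_comp_const_mul
    (one_div_one_sub_cpow_hasFPowerSeriesOnBall_zero (α + 2)) ((RCLike.norm_conj w).trans_le hw)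
  simpa only [choose_eq_inv_wb2 hα, ← div_eq_mul_inv, ← kern_zero hα] using hbinomial

theorem tcoeff_kern_zero (hα : -2 < α) {w : ℂ} (hw : ‖w‖ ≤ 1) (j : ℕ) :
    tcoeff (kern α 0 w) j = conj w ^ j / (wb2 α j : ℂ) :=
  congrFun (tcoeff_eq_of_hasFPowerSeriesAt
    (hasFPowerSeriesOnBall_kern_zero hα hw).hasFPowerSeriesAt) j

theorem analyticOnNhd_kern_zero (hα : -2 < α) {w : ℂ} (hw : ‖w‖ ≤ 1) :
    AnalyticOnNhd ℂ (kern α 0 w) unitDisk := by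
  simpa [unitDisk, ← Metric.eball_ofReal] using
    (hasFPowerSeriesOnBall_kern_zero hα hw).analyticOnNhd

-- The sum of this series is `K_w(w) = ‖K_w‖²`.
theorem summable_tcoeff_kern_zero (hα : -2 < α) {w : ℂ} (hw : w ∈ unitDisk) :
    Summable fun j ↦ ‖tcoeff (kern α 0 w) j‖ ^ 2 * wb2 α j := by
  have hnorm : ‖w‖ ≤ 1 := (mem_unitDisk.1 hw).le
  have hself := (hasSum_tcoeff (analyticOnNhd_kern_zero hα hnorm) hw).summable
  rw [← summable_ofReal]
  refine hself.congr fun j ↦ ?_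
  have hwb2 := ofReal_wb2_ne_zero hα j
  rw [tcoeff_kern_zero hα hnorm, ofReal_mul, ofReal_pow, ← conj_mul']
  simp only [map_div₀, map_pow, conj_conj, conj_ofReal]
  field_simp

end Kernel

namespace BergmanModel

variable {α : ℝ} {H : Type} [NormedAddCommGroup H] [InnerProductSpace ℂ H] (M : BergmanModel α H)

theorem exists_eqOn_kern_zero (hα : -2 < α) {w : ℂ} (hw : w ∈ unitDisk) :
    ∃ k : H, EqOn (M.emb k) (kern α 0 w) unitDisk :=
  M.exists_rep _ (analyticOnNhd_kern_zero hα (mem_unitDisk.1 hw).le)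
    (summable_tcoeff_kern_zero hα hw)

theorem inner_eq_emb_of_eqOn_kern_zero (hα : -2 < α) {w : ℂ} (hw : w ∈ unitDisk) {k : H}
    (hk : EqOn (M.emb k) (kern α 0 w) unitDisk) (f : H) : inner ℂ k f = M.emb f w := by
  rw [M.inner_eq, ← (hasSum_tcoeff (M.analyticOn f) hw).tsum_eq]
  refine tsum_congr fun j ↦ ?_
  have hwb2 := ofReal_wb2_ne_zero hα j
  rw [tcoeff_congr hk, tcoeff_kern_zero hα (mem_unitDisk.1 hw).le]
  simp only [map_div₀, map_pow, conj_conj, conj_ofReal]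
  field_simp

theorem adjoint_eq_zero_of_eqOn_kern_zero [CompleteSpace H] (hα : -2 < α) {w : ℂ}
    (hw : w ∈ unitDisk) {k : H} (hk : EqOn (M.emb k) (kern α 0 w) unitDisk) {T : H →L[ℂ] H}
    (hT : ∀ f, M.emb (T f) w = 0) : ContinuousLinearMap.adjoint T k = 0 := by
  refine ext_inner_right ℂ fun f ↦ ?_
  rw [ContinuousLinearMap.adjoint_inner_left, M.inner_eq_emb_of_eqOn_kern_zero hα hw hk, hT,
    inner_zero_left]

theorem eqOn_kern_conj {C : H → H}
    (hC : ∀ f, ∀ z ∈ unitDisk, M.emb (C f) z = conj (M.emb f (conj z))) {m : ℕ} {w : ℂ}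
    (hw : w ∈ unitDisk) {k : H} (hk : EqOn (M.emb k) (kern α m w) unitDisk) :
    EqOn (M.emb (C k)) (kern α m (conj w)) unitDisk := by
  intro z hz
  have hz' := conj_mem_unitDisk hz
  rw [hC k z hz, hk hz', conj_kern m (mem_unitDisk.1 hw).le hz', conj_conj]

theorem emb_apply_eqOn_zero_of_symmetric [CompleteSpace H] (hα : -2 < α) {C : H → H}
    (hC : ∀ f, ∀ z ∈ unitDisk, M.emb (C f) z = conj (M.emb f (conj z))) {T : H →L[ℂ] H}
    (hsym : ∀ f, C (ContinuousLinearMap.adjoint T (C f)) = T f) {w : ℂ} (hw : w ∈ unitDisk)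
    (hT : ∀ f, M.emb (T f) (conj w) = 0) {k : H} (hk : EqOn (M.emb k) (kern α 0 w) unitDisk) :
    EqOn (M.emb (T k)) 0 unitDisk := by
  have hadjoint : ContinuousLinearMap.adjoint T (C k) = 0 :=
    M.adjoint_eq_zero_of_eqOn_kern_zero hα (conj_mem_unitDisk hw) (M.eqOn_kern_conj hC hw hk) hT
  intro z hz
  rw [← hsym, hadjoint, hC 0 z hz, map_zero, Pi.zero_apply, map_zero, Pi.zero_apply]

end BergmanModel

/-- At `α = -1` all the weights are `1`, so this covers the Hardy space. -/
theorem stmt_4_general (α : ℝ) (hα : -2 < α) (n : ℕ)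
    (H : Type) [NormedAddCommGroup H] [InnerProductSpace ℂ H] [CompleteSpace H]
    (M : BergmanModel α H)
    (ψ : ℂ → ℂ) (hψa : AnalyticOnNhd ℂ ψ unitDisk)
    (hψ0 : ∃ z ∈ unitDisk, ψ z ≠ 0)
    (φ : ℂ → ℂ) (hφa : AnalyticOnNhd ℂ φ unitDisk)
    (hφm : ∀ z ∈ unitDisk, φ z ∈ unitDisk)
    (hφnc : ∃ z ∈ unitDisk, ∃ w ∈ unitDisk, φ z ≠ φ w)
    (T : H →L[ℂ] H)
    (hT : ∀ f : H, ∀ z ∈ unitDisk,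
      M.emb (T f) z = ψ z * iteratedDeriv n (M.emb f) (φ z))
    (Jm : H → H)
    (hJm : ∀ f : H, ∀ z ∈ unitDisk,
      M.emb (Jm f) z = (starRingEnd ℂ) (M.emb f ((starRingEnd ℂ) z)))
    (hsym : ∀ f : H, Jm (ContinuousLinearMap.adjoint T (Jm f)) = T f) :
    ∀ w ∈ unitDisk, w ≠ 0 → ψ w ≠ 0 := by
  intro w hw hw0 hψw
  obtain ⟨k, hk⟩ := M.exists_eqOn_kern_zero hα (conj_mem_unitDisk hw)
  have hTk : ∀ z ∈ unitDisk, ψ z * iteratedDeriv n (M.emb k) (φ z) = 0 := fun z hz ↦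
    hT k z hz ▸ M.emb_apply_eqOn_zero_of_symmetric hα hJm hsym (conj_mem_unitDisk hw)
      (fun f ↦ by rw [conj_conj, hT f w hw, hψw, zero_mul]) hk hz
  have himage : (φ '' unitDisk).Nontrivial :=
    let ⟨_, hz, _, hz', hne⟩ := hφnc
    ⟨_, mem_image_of_mem φ hz, _, mem_image_of_mem φ hz', hne⟩
  have hderiv_analytic : AnalyticOnNhd ℂ (iteratedDeriv n (M.emb k)) unitDisk := by
    simpa only [iteratedDeriv_eq_iterate] using (M.analyticOn k).iterated_deriv n
  have hderiv : EqOn (iteratedDeriv n (M.emb k)) 0 unitDisk :=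
    eqOn_zero_of_mul_comp_eqOn_zero isPreconnected_unitDisk isOpen_unitDisk
      isPreconnected_unitDisk hψa hψ0 hφa hφm himage hderiv_analytic hTk
  have hcoeff : w ^ n / (wb2 α n : ℂ) = 0 := by
    rw [← conj_conj w, ← tcoeff_kern_zero hα (mem_unitDisk.1 (conj_mem_unitDisk hw)).le,
      ← tcoeff_congr hk, tcoeff, hderiv zero_mem_unitDisk, Pi.zero_apply, zero_div]
  exact div_ne_zero (pow_ne_zero n hw0) (ofReal_wb2_ne_zero hα n) hcoeff

/-- If `D_{ψ,φ,n}` is bounded and `J`-symmetric on `A_α²`, then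
`ψ(w) ≠ 0` for every `w ∈ 𝔻 \ {0}`. -/
theorem stmt_4 (α : ℝ) (hα : -1 < α) (n : ℕ) (hn : 1 ≤ n)
    (H : Type) [NormedAddCommGroup H] [InnerProductSpace ℂ H] [CompleteSpace H]
    (M : BergmanModel α H)
    (ψ : ℂ → ℂ) (hψa : AnalyticOnNhd ℂ ψ unitDisk)
    (hψ0 : ∃ z ∈ unitDisk, ψ z ≠ 0)
    (φ : ℂ → ℂ) (hφa : AnalyticOnNhd ℂ φ unitDisk)
    (hφm : ∀ z ∈ unitDisk, φ z ∈ unitDisk)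
    (hφnc : ∃ z ∈ unitDisk, ∃ w ∈ unitDisk, φ z ≠ φ w)
    (T : H →L[ℂ] H)
    (hT : ∀ f : H, ∀ z ∈ unitDisk,
      M.emb (T f) z = ψ z * iteratedDeriv n (M.emb f) (φ z))
    (Jm : H → H)
    (hJm : ∀ f : H, ∀ z ∈ unitDisk,
      M.emb (Jm f) z = (starRingEnd ℂ) (M.emb f ((starRingEnd ℂ) z)))
    (hsym : ∀ f : H, Jm (ContinuousLinearMap.adjoint T (Jm f)) = T f) :
    ∀ w ∈ unitDisk, w ≠ 0 → ψ w ≠ 0 :=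
  stmt_4_general α (by linarith) n H M ψ hψa hψ0 φ hφa hφm hφnc T hT Jm hJm hsym
end
end

section
/- Let α > −1 and n ≥ 1, and suppose D_{ψ,φ,n} is bounded and self-adjoint on A_α², so that ψ(z) = a z^n/(n! (1 − conj(c) z)^{n+α+2}) and φ(z) = c + b z/(1 − conj(c) z) with a, b nonzero real numbers and c ∈ 𝔻. If c = 0, then D_{ψ,φ,n} is J-symmetric; and if c ≠ 0, then D_{ψ,φ,n} is C_{e^{−2iθ}z}J-symmetric, where θ = Arg(c) and C_{e^{−2iθ}z} f(z) = f(e^{−2iθ} z). -/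
open Complex Metric Set

noncomputable section

/-- The argument of a complex number, normalized to lie in `[0, 2π)` (with `Arg 0 = 0`). -/
def arg2pi (c : ℂ) : ℝ :=
  if Complex.arg c < 0 then Complex.arg c + 2 * Real.pi else Complex.arg c

/-!
With `u = e^{-2iθ}`, the map `C f (z) = conj (f (conj (u z)))` satisfies `C ψ = u ^ n ψ` and
`C φ = u φ`, because `u c = conj c`. By the chain rule `C` then commutes with
`T : f ↦ ψ · (f⁽ⁿ⁾ ∘ φ)`; since `|u| = 1`, `C` is an involution, so `C T C = T`. Self-adjointness
turns this into `C T* C = T`.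
-/

open scoped ComplexConjugate

section IteratedDeriv

variable {𝕜 : Type*} [NontriviallyNormedField 𝕜]

theorem iteratedDeriv_comp_mul_left {F : Type*} [NormedAddCommGroup F] [NormedSpace 𝕜 F]
    (k : ℕ) (u : 𝕜) (f : 𝕜 → F) :
    iteratedDeriv k (fun x => f (u * x)) = fun x => u ^ k • iteratedDeriv k f (u * x) := by
  induction k with
  | zero => simp
  | succ k ih =>
    ext x
    rw [iteratedDeriv_succ, ih, deriv_fun_const_smul_field, deriv_comp_mul_left,
      iteratedDeriv_succ, smul_smul, pow_succ]

theorem iteratedDeriv_conj_conj [StarRing 𝕜] [NormedStarGroup 𝕜] (k : ℕ) (f : 𝕜 → 𝕜) :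
    iteratedDeriv k (conj ∘ f ∘ conj) = conj ∘ iteratedDeriv k f ∘ conj := by
  induction k with
  | zero => simp
  | succ k ih => rw [iteratedDeriv_succ, ih, deriv_conj_conj, iteratedDeriv_succ]

end IteratedDeriv

/-- The function `C_{uz} J f : z ↦ conj (f (conj (u z)))`; for `‖u‖ = 1` this is the conjugation `J`
followed by the rotation `z ↦ u z`. -/
def rotConj (u : ℂ) (f : ℂ → ℂ) (z : ℂ) : ℂ :=
  conj (f (conj (u * z)))

/-- The weighted composition–differentiation operator `D_{ψ,φ,n}` acting on arbitrary functions. -/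
def weightedCompDiff (ψ φ : ℂ → ℂ) (n : ℕ) (f : ℂ → ℂ) (z : ℂ) : ℂ :=
  ψ z * iteratedDeriv n f (φ z)

theorem iteratedDeriv_rotConj (k : ℕ) (u : ℂ) (f : ℂ → ℂ) (z : ℂ) :
    iteratedDeriv k (rotConj u f) z = u ^ k * rotConj u (iteratedDeriv k f) z := by
  have hscale := congrFun (iteratedDeriv_comp_mul_left k u (conj ∘ f ∘ conj)) z
  rwa [iteratedDeriv_conj_conj] at hscale

section Commutation

variable {u : ℂ} {ψ φ : ℂ → ℂ} {n : ℕ}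

theorem rotConj_weightedCompDiff_rotConj (hu : ‖u‖ = 1) {z : ℂ}
    (hψ : rotConj u ψ z = u ^ n * ψ z) (hφ : rotConj u φ z = u * φ z) (f : ℂ → ℂ) :
    rotConj u (weightedCompDiff ψ φ n (rotConj u f)) z = weightedCompDiff ψ φ n f z := by
  have hu' : conj u * u = 1 := by rw [conj_mul', hu]; norm_num
  have hφ' : conj (u * φ (conj (u * z))) = φ z := by
    calc conj (u * φ (conj (u * z))) = conj u * rotConj u φ z := map_mul ..
      _ = φ z := by rw [hφ, ← mul_assoc, hu', one_mul]
  calc rotConj u (weightedCompDiff ψ φ n (rotConj u f)) z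
      = rotConj u ψ z * (conj u ^ n * iteratedDeriv n f (conj (u * φ (conj (u * z))))) := by
        simp only [rotConj, weightedCompDiff]
        rw [iteratedDeriv_rotConj]
        simp only [rotConj, map_mul, map_pow, conj_conj]
    _ = (conj u * u) ^ n * (ψ z * iteratedDeriv n f (φ z)) := by rw [hψ, hφ']; ring
    _ = weightedCompDiff ψ φ n f z := by rw [hu', one_pow, one_mul, weightedCompDiff]

theorem conj_comp_weightedCompDiff_comp_conj {X : Type*} {ev : X → ℂ → ℂ} {Ω : Set ℂ}
    (hev : ∀ f g, EqOn (ev f) (ev g) Ω → f = g) (hΩ : IsOpen Ω)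
    (hΩu : ∀ z ∈ Ω, conj (u * z) ∈ Ω) (hφΩ : MapsTo φ Ω Ω) (hu : ‖u‖ = 1)
    (hψ : ∀ z ∈ Ω, rotConj u ψ z = u ^ n * ψ z) (hφ : ∀ z ∈ Ω, rotConj u φ z = u * φ z)
    {T C : X → X} (hT : ∀ f, EqOn (ev (T f)) (weightedCompDiff ψ φ n (ev f)) Ω)
    (hC : ∀ f, EqOn (ev (C f)) (rotConj u (ev f)) Ω) (f : X) :
    C (T (C f)) = T f := by
  refine hev _ _ fun z hz => ?_
  have hw := hΩu z hz
  have hTC : ev (T (C f)) (conj (u * z)) =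
      weightedCompDiff ψ φ n (rotConj u (ev f)) (conj (u * z)) := by
    rw [hT _ hw, weightedCompDiff, (hC f).iteratedDeriv_of_isOpen hΩ n (hφΩ hw), weightedCompDiff]
  calc ev (C (T (C f))) z = rotConj u (weightedCompDiff ψ φ n (rotConj u (ev f))) z := by
        rw [hC _ hz, rotConj, hTC, rotConj]
    _ = weightedCompDiff ψ φ n (ev f) z :=
        rotConj_weightedCompDiff_rotConj hu (hψ z hz) (hφ z hz) (ev f)
    _ = ev (T f) z := (hT f hz).symm

end Commutation

section Symbols

variable {u c z : ℂ}

theorem conj_mul_mem_unitDisk (hu : ‖u‖ = 1) (hz : z ∈ unitDisk) : conj (u * z) ∈ unitDisk := by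
  simpa [unitDisk, hu] using hz

theorem one_sub_conj_mul_mem_slitPlane (hc : c ∈ unitDisk) (hz : z ∈ unitDisk) :
    1 - conj c * z ∈ slitPlane := by
  rw [unitDisk, mem_ball_zero_iff] at hc hz
  have hcz : ‖-(conj c * z)‖ < 1 := by
    rw [norm_neg, norm_mul, RCLike.norm_conj]
    exact mul_lt_one_of_nonneg_of_lt_one_left (norm_nonneg c) hc hz.le
  exact sub_eq_add_neg (1 : ℂ) _ ▸ mem_slitPlane_of_norm_lt_one hcz

theorem one_sub_conj_mul_conj (huc : u * c = conj c) (z : ℂ) :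
    1 - conj c * conj (u * z) = conj (1 - conj c * z) := by
  simp only [← huc, map_sub, map_one, map_mul]
  ring

variable {ψ φ : ℂ → ℂ} {n : ℕ} {a b s : ℝ}

theorem rotConj_linearFractional (huc : u * c = conj c) (hu : ‖u‖ = 1)
    (hφ : ∀ z ∈ unitDisk, φ z = c + b * z / (1 - conj c * z)) (hz : z ∈ unitDisk) :
    rotConj u φ z = u * φ z := by
  rw [rotConj, hφ _ (conj_mul_mem_unitDisk hu hz), hφ z hz, one_sub_conj_mul_conj huc]
  simp only [map_add, map_div₀, map_mul, conj_conj, conj_ofReal, ← huc]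
  ring

theorem rotConj_weight (huc : u * c = conj c) (hu : ‖u‖ = 1) (hc : c ∈ unitDisk)
    (hψ : ∀ z ∈ unitDisk, ψ z = a * z ^ n / (n.factorial * (1 - conj c * z) ^ (s : ℂ)))
    (hz : z ∈ unitDisk) :
    rotConj u ψ z = u ^ n * ψ z := by
  have hpow : conj (1 - conj c * z) ^ (s : ℂ) = conj ((1 - conj c * z) ^ (s : ℂ)) := by
    rw [conj_cpow _ _ (slitPlane_arg_ne_pi (one_sub_conj_mul_mem_slitPlane hc hz)), conj_ofReal]
  rw [rotConj, hψ _ (conj_mul_mem_unitDisk hu hz), hψ z hz, one_sub_conj_mul_conj huc, hpow]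
  simp only [map_div₀, map_mul, map_pow, map_natCast, conj_conj, conj_ofReal]
  ring

end Symbols

theorem norm_mul_exp_arg2pi_mul_I (c : ℂ) : ‖c‖ * exp (arg2pi c * I) = c := by
  have harg : exp (arg2pi c * I) = exp (arg c * I) := by
    rw [arg2pi]
    split_ifs
    · rw [ofReal_add, ofReal_mul, ofReal_ofNat, add_mul, exp_periodic]
    · rfl
  rw [harg, norm_mul_exp_arg_mul_I]

theorem exp_neg_two_arg2pi_mul_self (c : ℂ) :
    exp (-(2 * (arg2pi c : ℂ)) * I) * c = conj c := by
  have hpolar := norm_mul_exp_arg2pi_mul_I c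
  set θ := arg2pi c
  calc exp (-(2 * (θ : ℂ)) * I) * c
      = exp (-(2 * (θ : ℂ)) * I) * (‖c‖ * exp (θ * I)) := by rw [hpolar]
    _ = ‖c‖ * exp (-(θ * I)) := by rw [mul_left_comm, ← exp_add]; ring_nf
    _ = conj (‖c‖ * exp (θ * I)) := by simp [← exp_conj]
    _ = conj c := by rw [hpolar]

theorem norm_exp_neg_two_arg2pi (c : ℂ) : ‖exp (-(2 * (arg2pi c : ℂ)) * I)‖ = 1 := by
  exact_mod_cast norm_exp_ofReal_mul_I (-(2 * arg2pi c))

theorem stmt_13_general {H : Type*} [NormedAddCommGroup H] [InnerProductSpace ℂ H]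
    [CompleteSpace H] {ev : H → ℂ → ℂ} (hev : ∀ f g, EqOn (ev f) (ev g) unitDisk → f = g)
    {n : ℕ} {a b s : ℝ} {c u : ℂ} (hu : ‖u‖ = 1) (huc : u * c = conj c) {ψ φ : ℂ → ℂ}
    (hψ : ∀ z ∈ unitDisk, ψ z = a * z ^ n / (n.factorial * (1 - conj c * z) ^ (s : ℂ)))
    (hφ : ∀ z ∈ unitDisk, φ z = c + b * z / (1 - conj c * z))
    (hφm : ∀ z ∈ unitDisk, φ z ∈ unitDisk) {T : H →L[ℂ] H}
    (hT : ∀ f, ∀ z ∈ unitDisk, ev (T f) z = ψ z * iteratedDeriv n (ev f) (φ z))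
    (hsa : ContinuousLinearMap.adjoint T = T) {C : H → H}
    (hC : ∀ f, ∀ z ∈ unitDisk, ev (C f) z = conj (ev f (conj (u * z)))) (f : H) :
    C (ContinuousLinearMap.adjoint T (C f)) = T f := by
  have h0 : (0 : ℂ) ∈ unitDisk := mem_ball_self one_pos
  have hc : c ∈ unitDisk := by simpa [hφ 0 h0] using hφm 0 h0
  rw [hsa]
  exact conj_comp_weightedCompDiff_comp_conj hev isOpen_ball
    (fun _ => conj_mul_mem_unitDisk hu) hφm hu (fun _ => rotConj_weight huc hu hc hψ)
    (fun _ => rotConj_linearFractional huc hu hφ) hT hC f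

/-- If `D_{ψ,φ,n}` is bounded and self-adjoint on `A_α²`, with
`ψ(z) = a z^n/(n!(1-conj(c)z)^{n+α+2})` and `φ(z) = c + bz/(1-conj(c)z)` for nonzero
reals `a, b` and `c ∈ 𝔻`, then: if `c = 0` it is `J`-symmetric, and if `c ≠ 0` it is
`C_{e^{-2iθ}z}J`-symmetric, where `θ = Arg(c)`. -/
theorem stmt_13 (α : ℝ) (hα : -1 < α) (n : ℕ) (hn : 1 ≤ n)
    (H : Type) [NormedAddCommGroup H] [InnerProductSpace ℂ H] [CompleteSpace H]
    (M : BergmanModel α H)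
    (a b : ℝ) (ha : a ≠ 0) (hb : b ≠ 0) (c : ℂ) (hc : c ∈ unitDisk)
    (ψ φ : ℂ → ℂ)
    (hψ : ∀ z ∈ unitDisk, ψ z = (a : ℂ) * z ^ n /
      ((n.factorial : ℂ) * (1 - (starRingEnd ℂ) c * z) ^ ((n : ℂ) + (α : ℂ) + 2)))
    (hφ : ∀ z ∈ unitDisk, φ z = c + (b : ℂ) * z / (1 - (starRingEnd ℂ) c * z))
    (hφm : ∀ z ∈ unitDisk, φ z ∈ unitDisk)
    (T : H →L[ℂ] H)
    (hT : ∀ f : H, ∀ z ∈ unitDisk,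
      M.emb (T f) z = ψ z * iteratedDeriv n (M.emb f) (φ z))
    (hsa : ContinuousLinearMap.adjoint T = T) :
    (c = 0 → ∀ Jm : H → H,
      (∀ f : H, ∀ z ∈ unitDisk,
        M.emb (Jm f) z = (starRingEnd ℂ) (M.emb f ((starRingEnd ℂ) z))) →
      ∀ f : H, Jm (ContinuousLinearMap.adjoint T (Jm f)) = T f) ∧
    (c ≠ 0 → ∀ Cm : H → H,
      (∀ f : H, ∀ z ∈ unitDisk,
        M.emb (Cm f) z = (starRingEnd ℂ) (M.emb f
          ((starRingEnd ℂ) (Complex.exp (-(2 * (arg2pi c : ℂ)) * Complex.I) * z)))) →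
      ∀ f : H, Cm (ContinuousLinearMap.adjoint T (Cm f)) = T f) := by
  have hψ' : ∀ z ∈ unitDisk, ψ z = a * z ^ n /
      (n.factorial * (1 - conj c * z) ^ ((n + α + 2 : ℝ) : ℂ)) := by exact_mod_cast hψ
  exact ⟨fun h0 _ hJ => stmt_13_general M.inj (u := 1) norm_one (by simp [h0]) hψ' hφ hφm hT hsa
      (by simpa only [one_mul] using hJ),
    fun _ _ hC => stmt_13_general M.inj (norm_exp_neg_two_arg2pi c)
      (exp_neg_two_arg2pi_mul_self c) hψ' hφ hφm hT hsa hC⟩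
end
end
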